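/- Let Δ₅^{Bℓ} ⊂ ℝ² be the convex hull of (0,0), (5,0), (5,1), (4,3), (7/2,7/2) and let P₅(x,y) = 4·x³·y³·(x+y)²·(x−y)². Then (∫_{Δ₅^{Bℓ}} x·P₅ dxdy)/(∫_{Δ₅^{Bℓ}} P₅ dxdy) = 5341911643737/1292188833728 and (∫_{Δ₅^{Bℓ}} y·P₅ dxdy)/(∫_{Δ₅^{Bℓ}} P₅ dxdy) = 2416468747943/1292188833728; in particular the first quantity is greater than 4 and the sum of the two quantities is greater than 6. -/

import Mathlib

/-!
A homogeneous function `f` of degree `d` integrates over the triangle `0, a, b` to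
`|a × b| / (d + 2)` times its integral along the edge from `a` to `b`: in the coordinates
`s • ((1 - t) • a + t • b)` the Jacobian is `s |a × b|`, so the radial variable contributes
`∫₀¹ s ^ (d + 1) ds`. A convex polygon with a vertex at the origin is a fan of such triangles, hence
an integral of a homogeneous function over it is a sum of one-dimensional integrals over the edges
away from the origin. The density `P₅` is homogeneous of degree `10` and its moments `x P₅`, `y P₅`
of degree `11`; three edges of `Δ₅^{Bℓ}` do not contain the origin, and on each of them the mass and
both first moments follow from `∫ P₅` and `∫ t P₅` in the edge parameter `t`.
-/

open MeasureTheory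

/-- The two-dimensional cross product `a.1 * b.2 - a.2 * b.1`, linear in its second argument so that
its sign conditions are half-planes. -/
noncomputable def planarCross (a : ℝ × ℝ) : ℝ × ℝ →ₗ[ℝ] ℝ :=
  a.1 • LinearMap.snd ℝ ℝ ℝ - a.2 • LinearMap.fst ℝ ℝ ℝ

lemma planarCross_apply (a b : ℝ × ℝ) : planarCross a b = a.1 * b.2 - a.2 * b.1 := rfl

lemma lineMap_eq_mk (a b : ℝ × ℝ) (t : ℝ) :
    AffineMap.lineMap a b t = (a.1 + t * (b.1 - a.1), a.2 + t * (b.2 - a.2)) := by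
  ext <;> simp [AffineMap.lineMap_apply, add_comm]

lemma planarCross_smul_eq (a b p : ℝ × ℝ) :
    planarCross a b • p = planarCross a p • b - planarCross b p • a := by
  ext <;> simp only [planarCross_apply, Prod.smul_fst, Prod.smul_snd, Prod.fst_sub, Prod.snd_sub,
    smul_eq_mul] <;> ring

lemma volume_setOf_planarCross_eq_zero {b : ℝ × ℝ} (hb : b ≠ 0) :
    volume {p | planarCross b p = 0} = 0 := by
  refine Measure.addHaar_submodule volume (planarCross b).ker fun hker ↦ hb ?_
  have hzero (p : ℝ × ℝ) : planarCross b p = 0 := by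
    simp [LinearMap.ker_eq_top.mp hker]
  have hfst := hzero (0, 1)
  have hsnd := hzero (1, 0)
  simp only [planarCross_apply, mul_one, mul_zero, sub_zero, zero_sub, neg_eq_zero] at hfst hsnd
  exact Prod.ext hfst hsnd

lemma aedisjoint_of_separating_line {b : ℝ × ℝ} (hb : b ≠ 0) {S T : Set (ℝ × ℝ)}
    (hS : ∀ p ∈ S, planarCross b p ≤ 0) (hT : ∀ p ∈ T, 0 ≤ planarCross b p) :
    AEDisjoint volume S T :=
  measure_mono_null (fun p hp ↦ le_antisymm (hS p hp.1) (hT p hp.2))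
    (volume_setOf_planarCross_eq_zero hb)

section Triangle

variable {a b : ℝ × ℝ}

lemma mem_convexHull_zero_pair {p : ℝ × ℝ} (hab : 0 < planarCross a b) (ha : 0 ≤ planarCross a p)
    (hb : planarCross b p ≤ 0) (hp : 0 ≤ planarCross (b - a) (p - a)) :
    p ∈ convexHull ℝ {0, a, b} := by
  refine mem_convexHull_of_exists_fintype
    ![planarCross (b - a) (p - a) / planarCross a b, -planarCross b p / planarCross a b,
      planarCross a p / planarCross a b] ![0, a, b] (fun i ↦ ?_) ?_ (fun i ↦ ?_) ?_
  · fin_cases i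
    · exact div_nonneg hp hab.le
    · exact div_nonneg (neg_nonneg.mpr hb) hab.le
    · exact div_nonneg ha hab.le
  · simp only [Fin.sum_univ_three, Matrix.cons_val]
    field_simp
    simp only [planarCross_apply, Prod.fst_sub, Prod.snd_sub]
    ring
  · fin_cases i <;> simp
  · simp only [Fin.sum_univ_three, Matrix.cons_val, div_eq_inv_mul, mul_smul, ← smul_add]
    rw [inv_smul_eq_iff₀ hab.ne', planarCross_smul_eq a b p]
    module

variable (a b) in
/-- The chart `(s, t) ↦ s • ((1 - t) • a + t • b)` of the triangle `0, a, b` by the unit square;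
it collapses the side `s = 0` to the vertex `0`. -/
noncomputable def coneChart (q : ℝ × ℝ) : ℝ × ℝ := q.1 • AffineMap.lineMap a b q.2

variable (a b) in
/-- The derivative of `coneChart a b` at `q`. -/
noncomputable def fderivConeChart (q : ℝ × ℝ) : ℝ × ℝ →L[ℝ] ℝ × ℝ :=
  (Matrix.toLin (.finTwoProd ℝ) (.finTwoProd ℝ)
    !![a.1 + q.2 * (b.1 - a.1), q.1 * (b.1 - a.1);
       a.2 + q.2 * (b.2 - a.2), q.1 * (b.2 - a.2)]).toContinuousLinearMap

lemma coneChart_eq (q : ℝ × ℝ) : coneChart a b q =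
    (q.1 * (a.1 + q.2 * (b.1 - a.1)), q.1 * (a.2 + q.2 * (b.2 - a.2))) := by
  rw [coneChart, lineMap_eq_mk, Prod.smul_mk, smul_eq_mul, smul_eq_mul]

lemma hasFDerivAt_coneChart (q : ℝ × ℝ) :
    HasFDerivAt (coneChart a b) (fderivConeChart a b q) q := by
  have hcoord (u w : ℝ) := hasFDerivAt_fst (𝕜 := ℝ) (p := q) |>.mul
    ((hasFDerivAt_snd (𝕜 := ℝ) (p := q)).mul_const w |>.const_add u)
  rw [funext coneChart_eq, fderivConeChart, Matrix.toLin_finTwoProd_toContinuousLinearMap]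
  convert! (hcoord a.1 (b.1 - a.1)).prodMk (hcoord a.2 (b.2 - a.2)) using 2 <;>
    simp [smul_smul, add_comm]

lemma det_fderivConeChart (q : ℝ × ℝ) : (fderivConeChart a b q).det = q.1 * planarCross a b := by
  simp only [fderivConeChart, LinearMap.det_toContinuousLinearMap, LinearMap.det_toLin,
    Matrix.det_fin_two_of, planarCross_apply]
  ring

lemma injOn_coneChart (hab : planarCross a b ≠ 0) : Set.InjOn (coneChart a b) {q | q.1 ≠ 0} := by
  rintro ⟨s, t⟩ hs ⟨s', t'⟩ - h
  have hat : s * t = s' * t' := by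
    refine mul_right_cancel₀ hab ?_
    have := congrArg (planarCross a) h
    simp only [coneChart_eq, planarCross_apply] at this ⊢
    linear_combination this
  have hs' : s = s' := by
    refine mul_right_cancel₀ hab ?_
    have := congrArg (planarCross b) h
    simp only [coneChart_eq, planarCross_apply] at this ⊢
    linear_combination -this + hat * (a.1 * b.2 - a.2 * b.1)
  subst hs'
  exact Prod.ext rfl (mul_left_cancel₀ hs hat)

variable (a b) in
lemma coneChart_image_Icc_prod_Icc :
    coneChart a b '' (Set.Icc 0 1 ×ˢ Set.Icc 0 1) = convexHull ℝ {0, a, b} := by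
  ext p
  simp only [convexHull_insert (Set.insert_nonempty _ _), convexHull_pair, mem_convexJoin,
    segment_eq_image_lineMap, Set.mem_singleton_iff, exists_eq_left]
  constructor
  · rintro ⟨⟨s, t⟩, ⟨hs, ht⟩, rfl⟩
    exact ⟨_, ⟨t, ht, rfl⟩, s, hs, by simp [coneChart, AffineMap.lineMap_apply]⟩
  · rintro ⟨_, ⟨t, ht, rfl⟩, s, hs, rfl⟩
    exact ⟨(s, t), ⟨hs, ht⟩, by simp [coneChart, AffineMap.lineMap_apply]⟩

lemma coneChart_image_ae_eq :
    coneChart a b '' (Set.Ioc 0 1 ×ˢ Set.Icc 0 1) =ᵐ[volume] convexHull ℝ {0, a, b} := by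
  rw [← coneChart_image_Icc_prod_Icc, ← Set.Ioc_insert_left zero_le_one, Set.insert_prod,
    Set.image_union]
  refine (union_ae_eq_right_of_ae_eq_empty (ae_eq_empty.mpr ?_)).symm
  refine measure_mono_null (t := {0}) ?_ (measure_singleton 0)
  rintro _ ⟨_, ⟨t, -, rfl⟩, rfl⟩
  simp [coneChart]

variable {E : Type*} [NormedAddCommGroup E] [NormedSpace ℝ E] {f : ℝ × ℝ → E} {d : ℕ}

lemma setIntegral_convexHull_zero_pair_of_homogeneous
    (hf : ∀ s : ℝ, 0 < s → ∀ p, f (s • p) = s ^ d • f p) (hab : planarCross a b ≠ 0) :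
    ∫ p in convexHull ℝ {0, a, b}, f p =
      (|planarCross a b| / (d + 2)) • ∫ t in (0 : ℝ)..1, f (AffineMap.lineMap a b t) := by
  have hmeas : MeasurableSet (Set.Ioc (0 : ℝ) 1 ×ˢ Set.Icc (0 : ℝ) 1) :=
    measurableSet_Ioc.prod measurableSet_Icc
  have hradial : ∫ s in Set.Ioc (0 : ℝ) 1, s ^ (d + 1) = 1 / (d + 2) := by
    rw [← intervalIntegral.integral_of_le zero_le_one, integral_pow]
    norm_num [add_assoc]
  calc ∫ p in convexHull ℝ {0, a, b}, f p
      = ∫ q in Set.Ioc (0 : ℝ) 1 ×ˢ Set.Icc (0 : ℝ) 1,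
          |q.1 * planarCross a b| • f (coneChart a b q) := by
        rw [← setIntegral_congr_set coneChart_image_ae_eq,
          integral_image_eq_integral_abs_det_fderiv_smul volume hmeas
            (fun q _ ↦ (hasFDerivAt_coneChart q).hasFDerivWithinAt)
            ((injOn_coneChart hab).mono fun q hq ↦ hq.1.1.ne')]
        simp only [det_fderivConeChart]
    _ = ∫ q in Set.Ioc (0 : ℝ) 1 ×ˢ Set.Icc (0 : ℝ) 1,
          q.1 ^ (d + 1) • |planarCross a b| • f (AffineMap.lineMap a b q.2) := by
        refine setIntegral_congr_fun hmeas fun q hq ↦ ?_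
        have hq : 0 < q.1 := hq.1.1
        simp only [coneChart, hf _ hq, abs_mul, abs_of_pos hq, smul_smul]
        ring_nf
    _ = (|planarCross a b| / (d + 2)) • ∫ t in (0 : ℝ)..1, f (AffineMap.lineMap a b t) := by
        rw [Measure.volume_eq_prod, ← Measure.prod_restrict,
          integral_prod_smul (fun s : ℝ ↦ s ^ (d + 1))
            (fun t : ℝ ↦ |planarCross a b| • f (AffineMap.lineMap a b t)), hradial, integral_smul,
          integral_Icc_eq_integral_Ioc, ← intervalIntegral.integral_of_le zero_le_one, smul_smul,
          one_div_mul_eq_div]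

end Triangle

/-- The points `v 0, …, v n` are, in counterclockwise order, the vertices other than `0` of a convex
polygon with vertex `0`: they are seen from `0` in strictly increasing angular order within a
half-plane, and all of them lie to the left of each edge from `v i` to `v (i + 1)`. -/
structure IsConvexFan {n : ℕ} (v : Fin (n + 1) → ℝ × ℝ) : Prop where
  planarCross_pos : ∀ i j, i < j → 0 < planarCross (v i) (v j)
  left_of_edge : ∀ (i : Fin n) j, 0 ≤ planarCross (v i.succ - v i.castSucc) (v j - v i.castSucc)

namespace IsConvexFan

variable {n : ℕ}

section

variable {v : Fin (n + 1) → ℝ × ℝ}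

lemma planarCross_nonneg (hv : IsConvexFan v) {i j : Fin (n + 1)}
    (hij : i ≤ j) : 0 ≤ planarCross (v i) (v j) := by
  rcases hij.eq_or_lt with rfl | hlt
  · simp [planarCross_apply, mul_comm]
  · exact (hv.planarCross_pos i j hlt).le

lemma planarCross_nonpos (hv : IsConvexFan v) {i j : Fin (n + 1)}
    (hij : i ≤ j) : planarCross (v j) (v i) ≤ 0 := by
  have := hv.planarCross_nonneg hij
  simp only [planarCross_apply] at this ⊢
  linarith

lemma aedisjoint_triangle (hv : IsConvexFan v) {i j : Fin n}
    (hij : i < j) : AEDisjoint volume (convexHull ℝ {0, v i.castSucc, v i.succ})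
      (convexHull ℝ {0, v j.castSucc, v j.succ}) := by
  have hne : v i.succ ≠ 0 := fun h ↦ by
    simpa [h] using hv.planarCross_pos _ _ i.castSucc_lt_succ
  refine aedisjoint_of_separating_line hne (fun p hp ↦ ?_) (fun p hp ↦ ?_)
  · refine convexHull_min ?_ (convex_halfSpace_le (planarCross (v i.succ)).isLinear 0) hp
    rintro _ (rfl | rfl | rfl)
    · simp
    · exact hv.planarCross_nonpos i.castSucc_lt_succ.le
    · exact hv.planarCross_nonpos le_rfl
  · have hle : i.succ ≤ j.castSucc := hij
    refine convexHull_min ?_ (convex_halfSpace_ge (planarCross (v i.succ)).isLinear 0) hp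
    rintro _ (rfl | rfl | rfl)
    · simp
    · exact hv.planarCross_nonneg hle
    · exact hv.planarCross_nonneg (hle.trans j.castSucc_lt_succ.le)

end

variable {v : Fin (n + 2) → ℝ × ℝ}

lemma exists_sector (hv : IsConvexFan v) {p : ℝ × ℝ}
    (hp : p ∈ convexHull ℝ (insert 0 (Set.range v))) :
    ∃ i : Fin (n + 1), 0 ≤ planarCross (v i.castSucc) p ∧ planarCross (v i.succ) p ≤ 0 := by
  have hfirst : 0 ≤ planarCross (v 0) p := by
    refine convexHull_min ?_ (convex_halfSpace_ge (planarCross (v 0)).isLinear 0) hp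
    rintro _ (rfl | ⟨j, rfl⟩)
    · simp
    · exact hv.planarCross_nonneg j.zero_le
  have hlast : planarCross (v (Fin.last _)) p ≤ 0 := by
    refine convexHull_min ?_ (convex_halfSpace_le (planarCross (v (Fin.last _))).isLinear 0) hp
    rintro _ (rfl | ⟨j, rfl⟩)
    · simp
    · exact hv.planarCross_nonpos j.le_last
  by_contra! hstep
  have hall (i : Fin (n + 2)) : 0 ≤ planarCross (v i) p :=
    Fin.induction hfirst (fun i hi ↦ (hstep i hi).le) i
  exact hlast.not_gt (hstep (Fin.last n) (hall _))

lemma planarCross_sub_nonneg (hv : IsConvexFan v) {p : ℝ × ℝ}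
    (hp : p ∈ convexHull ℝ (insert 0 (Set.range v))) (i : Fin (n + 1)) :
    0 ≤ planarCross (v i.succ - v i.castSucc) (p - v i.castSucc) := by
  rw [map_sub, sub_nonneg]
  refine convexHull_min ?_
    (convex_halfSpace_ge (planarCross (v i.succ - v i.castSucc)).isLinear _) hp
  rintro _ (rfl | ⟨j, rfl⟩)
  · have := hv.planarCross_pos _ _ i.castSucc_lt_succ
    simp only [Set.mem_ofPred_eq, planarCross_apply, Prod.fst_sub, Prod.snd_sub, Prod.fst_zero,
      Prod.snd_zero] at this ⊢
    linarith
  · simpa only [Set.mem_ofPred_eq, map_sub, sub_nonneg] using hv.left_of_edge i j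

lemma convexHull_eq_iUnion (hv : IsConvexFan v) :
    convexHull ℝ (insert 0 (Set.range v)) =
      ⋃ i : Fin (n + 1), convexHull ℝ {0, v i.castSucc, v i.succ} := by
  refine Set.Subset.antisymm (fun p hp ↦ ?_) (Set.iUnion_subset fun i ↦ convexHull_mono ?_)
  · obtain ⟨i, hleft, hright⟩ := hv.exists_sector hp
    exact Set.mem_iUnion.mpr ⟨i, mem_convexHull_zero_pair
      (hv.planarCross_pos _ _ i.castSucc_lt_succ) hleft hright (hv.planarCross_sub_nonneg hp i)⟩
  · rintro _ (rfl | rfl | rfl) <;> simp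

variable {E : Type*} [NormedAddCommGroup E] [NormedSpace ℝ E] {f : ℝ × ℝ → E} {d : ℕ}

theorem setIntegral_of_homogeneous (hv : IsConvexFan v)
    (hf : ∀ s : ℝ, 0 < s → ∀ p, f (s • p) = s ^ d • f p)
    (hint : IntegrableOn f (convexHull ℝ (insert 0 (Set.range v)))) :
    ∫ p in convexHull ℝ (insert 0 (Set.range v)), f p =
      ∑ i : Fin (n + 1), (planarCross (v i.castSucc) (v i.succ) / (d + 2)) •
        ∫ t in (0 : ℝ)..1, f (AffineMap.lineMap (v i.castSucc) (v i.succ) t) := by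
  have hdisj : Pairwise (Function.onFun (AEDisjoint volume)
      fun i : Fin (n + 1) ↦ convexHull ℝ {0, v i.castSucc, v i.succ}) := by
    intro i j hij
    rcases hij.lt_or_gt with hlt | hgt
    · exact hv.aedisjoint_triangle hlt
    · exact (hv.aedisjoint_triangle hgt).symm
  rw [hv.convexHull_eq_iUnion] at hint ⊢
  rw [integral_iUnion_ae
    (fun i ↦ (Set.toFinite _).isClosed_convexHull ℝ |>.measurableSet.nullMeasurableSet)
    hdisj hint, tsum_fintype]
  refine Finset.sum_congr rfl fun i _ ↦ ?_
  have hpos := hv.planarCross_pos _ _ i.castSucc_lt_succ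
  rw [setIntegral_convexHull_zero_pair_of_homogeneous hf hpos.ne', abs_of_pos hpos]

end IsConvexFan

lemma integral_affine_mul_sum_pow {n : ℕ} (c : Fin n → ℝ) (u w : ℝ) :
    ∫ t in (0 : ℝ)..1, (u + w * t) * ∑ i, c i * t ^ (i : ℕ) =
      ∑ i, c i * (u / ((i : ℕ) + 1) + w / ((i : ℕ) + 2)) := by
  have hexpand (t : ℝ) : (u + w * t) * ∑ i, c i * t ^ (i : ℕ) =
      ∑ i, (c i * u * t ^ (i : ℕ) + c i * w * t ^ ((i : ℕ) + 1)) := by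
    rw [Finset.mul_sum]
    exact Finset.sum_congr rfl fun i _ ↦ by ring
  simp only [hexpand]
  rw [intervalIntegral.integral_finsetSum fun i _ ↦
    Continuous.intervalIntegrable (by fun_prop) _ _]
  refine Finset.sum_congr rfl fun i _ ↦ ?_
  rw [intervalIntegral.integral_add (Continuous.intervalIntegrable (by fun_prop) _ _)
    (Continuous.intervalIntegrable (by fun_prop) _ _)]
  simp only [intervalIntegral.integral_const_mul, integral_pow]
  push_cast
  ring

/-- The Duistermaat–Heckman density `P₅` of the symmetric space of type `AIII(2, 5)`. -/
def dhDensity (p : ℝ × ℝ) : ℝ := 4 * p.1 ^ 3 * p.2 ^ 3 * (p.1 + p.2) ^ 2 * (p.1 - p.2) ^ 2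

/-- The moment polytope `Δ₅^{Bℓ}` of the anticanonical bundle on the blow-up `Bℓ_Z(X₅)`. -/
def momentPolytope : Set (ℝ × ℝ) :=
  convexHull ℝ {((0 : ℝ), (0 : ℝ)), (5, 0), (5, 1), (4, 3), (7 / 2, 7 / 2)}

/-- The vertices of `momentPolytope` other than the origin, in counterclockwise order. -/
noncomputable def polytopeVertex : Fin 4 → ℝ × ℝ := ![(5, 0), (5, 1), (4, 3), (7 / 2, 7 / 2)]

lemma momentPolytope_eq_convexHull_insert_range :
    momentPolytope = convexHull ℝ (insert 0 (Set.range polytopeVertex)) := by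
  simp only [polytopeVertex, Matrix.range_cons, Matrix.range_empty, Set.union_empty,
    Set.singleton_union]
  rfl

lemma isConvexFan_polytopeVertex : IsConvexFan polytopeVertex where
  planarCross_pos i j hij := by
    fin_cases i <;> fin_cases j <;> first
      | exact absurd hij (by decide)
      | norm_num [polytopeVertex, planarCross_apply]
  left_of_edge := by
    norm_num [Fin.forall_fin_succ, polytopeVertex, planarCross_apply]

lemma setIntegral_momentPolytope_of_homogeneous {f : ℝ × ℝ → ℝ} {d : ℕ} (hcont : Continuous f)
    (hf : ∀ s : ℝ, 0 < s → ∀ p, f (s • p) = s ^ d • f p) :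
    ∫ p in momentPolytope, f p = (d + 2 : ℝ)⁻¹ *
      (5 * (∫ t in (0 : ℝ)..1, f (AffineMap.lineMap (5, 0) (5, 1) t)) +
        11 * (∫ t in (0 : ℝ)..1, f (AffineMap.lineMap (5, 1) (4, 3) t)) +
        7 / 2 * ∫ t in (0 : ℝ)..1, f (AffineMap.lineMap (4, 3) (7 / 2, 7 / 2) t)) := by
  have hcompact : IsCompact (convexHull ℝ (insert 0 (Set.range polytopeVertex))) :=
    (Set.toFinite _).isCompact_convexHull ℝ
  rw [momentPolytope_eq_convexHull_insert_range,
    isConvexFan_polytopeVertex.setIntegral_of_homogeneous hf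
      (hcont.continuousOn.integrableOn_compact hcompact)]
  simp only [polytopeVertex, planarCross_apply, smul_eq_mul, Fin.sum_univ_succ,
    Finset.univ_unique, Fin.default_eq_zero, Finset.sum_singleton, Fin.castSucc_zero,
    Fin.castSucc_succ, Matrix.cons_val_zero, Matrix.cons_val_succ, Matrix.cons_val_fin_one]
  ring

@[fun_prop]
lemma continuous_dhDensity : Continuous dhDensity := by
  unfold dhDensity
  fun_prop

lemma dhDensity_smul (s : ℝ) (p : ℝ × ℝ) : dhDensity (s • p) = s ^ 10 * dhDensity p := by
  simp only [dhDensity, Prod.smul_fst, Prod.smul_snd, smul_eq_mul]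
  ring

lemma integral_affine_mul_dhDensity_edge_zero (u w : ℝ) :
    ∫ t in (0 : ℝ)..1, (u + w * t) * dhDensity (AffineMap.lineMap (5, 0) (5, 1) t) =
      444125 / 6 * u + 3716000 / 63 * w := by
  have hexpand (t : ℝ) : dhDensity (AffineMap.lineMap (5, 0) (5, 1) t) =
      ∑ i, ![0, 0, 0, 312500, 0, -25000, 0, 500] i * t ^ (i : ℕ) := by
    simp only [dhDensity, lineMap_eq_mk, Fin.sum_univ_succ, Fin.sum_univ_zero,
      Matrix.cons_val_zero, Matrix.cons_val_succ, Fin.val_zero, Fin.val_succ]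
    ring
  simp only [hexpand, integral_affine_mul_sum_pow]
  simp only [Fin.sum_univ_succ, Fin.sum_univ_zero, Matrix.cons_val_zero, Matrix.cons_val_succ,
    Fin.val_zero, Fin.val_succ]
  push_cast
  ring

lemma integral_affine_mul_dhDensity_edge_one (u w : ℝ) :
    ∫ t in (0 : ℝ)..1, (u + w * t) * dhDensity (AffineMap.lineMap (5, 1) (4, 3) t) =
      4170935609 / 6930 * u + 142819807 / 462 * w := by
  have hexpand (t : ℝ) : dhDensity (AffineMap.lineMap (5, 1) (4, 3) t) =
      ∑ i, ![288000, 1219200, 665360, -2244864, -1036716, 1815372, -295500, -92364, 19288, 1200,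
        -288] i * t ^ (i : ℕ) := by
    simp only [dhDensity, lineMap_eq_mk, Fin.sum_univ_succ, Fin.sum_univ_zero,
      Matrix.cons_val_zero, Matrix.cons_val_succ, Fin.val_zero, Fin.val_succ]
    ring
  simp only [hexpand, integral_affine_mul_sum_pow]
  simp only [Fin.sum_univ_succ, Fin.sum_univ_zero, Matrix.cons_val_zero, Matrix.cons_val_succ,
    Fin.val_zero, Fin.val_succ]
  push_cast
  ring

lemma integral_affine_mul_dhDensity_edge_two (u w : ℝ) :
    ∫ t in (0 : ℝ)..1, (u + w * t) * dhDensity (AffineMap.lineMap (4, 3) (7 / 2, 7 / 2) t) =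
      5208847 / 45 * u + 33750955 / 1152 * w := by
  have hexpand (t : ℝ) : dhDensity (AffineMap.lineMap (4, 3) (7 / 2, 7 / 2) t) =
      ∑ i, ![338688, -635040, 234612, 158809 / 2, -62083 / 4, -20237 / 8, 5831 / 16, 49 / 2,
        -49 / 16] i * t ^ (i : ℕ) := by
    simp only [dhDensity, lineMap_eq_mk, Fin.sum_univ_succ, Fin.sum_univ_zero,
      Matrix.cons_val_zero, Matrix.cons_val_succ, Fin.val_zero, Fin.val_succ]
    ring
  simp only [hexpand, integral_affine_mul_sum_pow]
  simp only [Fin.sum_univ_succ, Fin.sum_univ_zero, Matrix.cons_val_zero, Matrix.cons_val_succ,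
    Fin.val_zero, Fin.val_succ]
  push_cast
  ring

lemma setIntegral_dhDensity : ∫ p in momentPolytope, dhDensity p = 1553111579 / 2520 := by
  rw [setIntegral_momentPolytope_of_homogeneous continuous_dhDensity fun s _ ↦ dhDensity_smul s]
  have hzero := integral_affine_mul_dhDensity_edge_zero 1 0
  have hone := integral_affine_mul_dhDensity_edge_one 1 0
  have htwo := integral_affine_mul_dhDensity_edge_two 1 0
  simp only [zero_mul, add_zero, one_mul] at hzero hone htwo
  rw [hzero, hone, htwo]
  norm_num

lemma setIntegral_linear_mul_dhDensity (α β : ℝ) :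
    ∫ p in momentPolytope, (α * p.1 + β * p.2) * dhDensity p =
      593545738193 / 232960 * α + 2416468747943 / 2096640 * β := by
  have hhom (s : ℝ) (p : ℝ × ℝ) : (α * (s • p).1 + β * (s • p).2) * dhDensity (s • p) =
      s ^ 11 * ((α * p.1 + β * p.2) * dhDensity p) := by
    simp only [dhDensity_smul, Prod.smul_fst, Prod.smul_snd, smul_eq_mul]
    ring
  have hedge (a b : ℝ × ℝ) (t : ℝ) :
      α * (AffineMap.lineMap a b t : ℝ × ℝ).1 + β * (AffineMap.lineMap a b t : ℝ × ℝ).2 =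
        (α * a.1 + β * a.2) + (α * (b.1 - a.1) + β * (b.2 - a.2)) * t := by
    rw [lineMap_eq_mk]
    ring
  rw [setIntegral_momentPolytope_of_homogeneous
    (f := fun p ↦ (α * p.1 + β * p.2) * dhDensity p) (by fun_prop) fun s _ ↦ hhom s]
  simp only [hedge, integral_affine_mul_dhDensity_edge_zero,
    integral_affine_mul_dhDensity_edge_one, integral_affine_mul_dhDensity_edge_two]
  ring

/-- The barycenter of the moment polytope `Δ₅^{Bℓ}` of the blow-up `Bℓ_Z(X₅)` with respect
to the Duistermaat–Heckman measure is
`(5341911643737/1292188833728, 2416468747943/1292188833728)`;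
in particular `x̄ > 4` and `x̄ + ȳ > 6`. -/
theorem barycenter_Delta5_blowup :
    let Δ : Set (ℝ × ℝ) := convexHull ℝ
      {((0 : ℝ), (0 : ℝ)), (5, 0), (5, 1), (4, 3), (7 / 2, 7 / 2)}
    let P : ℝ × ℝ → ℝ := fun p =>
      4 * p.1 ^ 3 * p.2 ^ 3 * (p.1 + p.2) ^ 2 * (p.1 - p.2) ^ 2
    let xbar : ℝ := (∫ p in Δ, p.1 * P p) / (∫ p in Δ, P p)
    let ybar : ℝ := (∫ p in Δ, p.2 * P p) / (∫ p in Δ, P p)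
    xbar = 5341911643737 / 1292188833728 ∧ ybar = 2416468747943 / 1292188833728 ∧
      4 < xbar ∧ 6 < xbar + ybar := by
  intro Δ P xbar ybar
  have hfst : ∫ p in Δ, p.1 * P p = 593545738193 / 232960 := by
    change ∫ p in momentPolytope, p.1 * dhDensity p = _
    simpa using setIntegral_linear_mul_dhDensity 1 0
  have hsnd : ∫ p in Δ, p.2 * P p = 2416468747943 / 2096640 := by
    change ∫ p in momentPolytope, p.2 * dhDensity p = _
    simpa using setIntegral_linear_mul_dhDensity 0 1
  have hmass : ∫ p in Δ, P p = 1553111579 / 2520 := setIntegral_dhDensity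
  have hx : xbar = 5341911643737 / 1292188833728 := by
    norm_num [xbar, hfst, hmass]
  have hy : ybar = 2416468747943 / 1292188833728 := by
    norm_num [ybar, hsnd, hmass]
  refine ⟨hx, hy, ?_, ?_⟩ <;> norm_num [hx, hy]
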